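/- Let 1 < α, β ≤ 2, let m ≥ 1, let A_α and A_β be the m×m WSGD Toeplitz matrices of orders α and β built from the weights for (p,q)=(1,0) or (p,q)=(1,-1), let τ, h > 0, and let K₁⁺, K₂⁺, K₁⁻, K₂⁻ ≥ 0 with (K₁⁺)² + (K₂⁺)² ≠ 0 and (K₁⁻)² + (K₂⁻)² ≠ 0. Define D_x = (τ/(2h^α))·( K₁⁺ (I ⊗ A_α) + K₂⁺ (I ⊗ A_αᵀ) ) and D_y = (τ/(2h^β))·( K₁⁻ (A_β ⊗ I) + K₂⁻ (A_βᵀ ⊗ I) ). Then I - D_x and I - D_y are invertible, and the powers of the iteration matrix M = (I - D_y)^{-1}(I - D_x)^{-1}(I + D_x)(I + D_y) converge to the zero matrix: M^n → 0 as n → ∞. (Hence the two-dimensional CN-WSGD scheme is unconditionally stable.) -/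

import Mathlib

/-!
Only one property of the WSGD matrix `A` matters: its quadratic form `u ⬝ᵥ A *ᵥ u` is negative on
nonzero vectors.

*Negativity.* Put `S k = ∑ i, u i * u (i + k)`, with `u` extended by zero. Then
`u ⬝ᵥ A *ᵥ u = w 1 * S 0 + (w 0 + w 2) * S 1 + w 3 * S 2 + ∑ k ≥ 3, w (k + 1) * S k`.
The weights satisfy `w k ≥ 0` for `k ≥ 4`, their partial sums are eventually nonpositive, and
`S k ≤ S 0`, so the form is at most `-(w 0 + w 2) * (S 0 - S 1) - w 3 * (S 0 - S 2)`. For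
`(p, q) = (1, -1)` the weight `w 3` is nonpositive, but it is compensated: from
`(a - c) ^ 2 ≤ 2 * (a - b) ^ 2 + 2 * (b - c) ^ 2` one gets `S 0 - S 2 ≤ 4 * (S 0 - S 1)`, and
`w 0 + w 2 + 4 * w 3 > 0`. As `S 1 < S 0` for `u ≠ 0`, the form is negative (`quad_neg`). Since
`∑ k ≤ n, gru α k = -(n + 1) / α * gru α (n + 1)` (`gru_partial`), the conditions on the weights are
elementary.

*Convergence.* Negativity passes to `Dx` and `Dy`. A matrix `D` with negative quadratic form
satisfies `‖(1 + D) v‖ < ‖(1 - D) v‖` for `v ≠ 0`, so `1 - D` is invertible and the Cayley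
transforms `(1 - Dx)⁻¹ * (1 + Dx)` and `(1 + Dy) * (1 - Dy)⁻¹` strictly decrease the Euclidean norm.
By compactness of the unit sphere their product has operator norm `< 1`, and the iteration matrix is
the conjugate of this product by `1 - Dy` (`adi_tendsto`).
-/

open Matrix Kronecker Filter

/-- Grünwald coefficients `g_k = (-1)^k * binom(α, k)`. -/
noncomputable def gru (α : ℝ) (k : ℕ) : ℝ :=
  (-1 : ℝ) ^ k * (∏ i ∈ Finset.range k, (α - (i : ℝ))) / (Nat.factorial k : ℝ)

/-- WSGD weights for `(p,q) = (1,0)`. -/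
noncomputable def w10 (α : ℝ) : ℕ → ℝ
  | 0 => α / 2 * gru α 0
  | k + 1 => α / 2 * gru α (k + 1) + (2 - α) / 2 * gru α k

/-- WSGD weights for `(p,q) = (1,-1)`. -/
noncomputable def w1m1 (α : ℝ) : ℕ → ℝ
  | 0 => (2 + α) / 4 * gru α 0
  | 1 => (2 + α) / 4 * gru α 1
  | k + 2 => (2 + α) / 4 * gru α (k + 2) + (2 - α) / 4 * gru α k

/-- The m×m WSGD Toeplitz matrix: `A i j = w (i - j + 1)` when `i - j + 1 ≥ 0`, else `0`
(0-based indices give the same entries as the 1-based description). -/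
noncomputable def wsgdMatrix (w : ℕ → ℝ) (m : ℕ) : Matrix (Fin m) (Fin m) ℝ :=
  Matrix.of fun i j => if (j : ℕ) ≤ (i : ℕ) + 1 then w ((i : ℕ) + 1 - (j : ℕ)) else 0

/-! ### Grünwald coefficients and WSGD weights -/

lemma gru_zero (α : ℝ) : gru α 0 = 1 := by simp [gru]

lemma gru_succ (α : ℝ) (k : ℕ) : gru α (k + 1) = gru α k * ((k - α) / (k + 1)) := by
  have h1 : (Nat.factorial k : ℝ) ≠ 0 := by positivity
  have h2 : (k : ℝ) + 1 ≠ 0 := by positivity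
  simp only [gru, Finset.prod_range_succ, pow_succ, Nat.factorial_succ]
  push_cast
  field_simp
  ring

lemma gru_one (α : ℝ) : gru α 1 = -α := by
  have := gru_succ α 0
  simpa [gru_zero] using this

lemma gru_two (α : ℝ) : gru α 2 = α * (α - 1) / 2 := by
  have := gru_succ α 1
  rw [this, gru_one]; push_cast; ring

lemma gru_three (α : ℝ) : gru α 3 = α * (α - 1) * (2 - α) / 6 := by
  have := gru_succ α 2
  rw [this, gru_two]; push_cast; ring

lemma gru_nonneg {α : ℝ} (h1 : 1 < α) (h2 : α ≤ 2) (k : ℕ) : 0 ≤ gru α (k + 2) := by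
  induction k with
  | zero =>
    rw [gru_two]
    exact div_nonneg (mul_nonneg (by linarith) (by linarith)) (by norm_num)
  | succ k ih =>
    rw [gru_succ]
    refine mul_nonneg ih (div_nonneg ?_ (by positivity))
    push_cast
    have : (0 : ℝ) ≤ k := k.cast_nonneg
    linarith

lemma gru_partial (α : ℝ) (n : ℕ) :
    gru α (n + 1) * (n + 1) = -α * ∑ k ∈ Finset.range (n + 1), gru α k := by
  induction n with
  | zero => simp [gru_zero, gru_one]
  | succ n ih =>
    rw [Finset.sum_range_succ, mul_add (-α), ← ih, gru_succ α (n + 1)]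
    push_cast
    have : (n : ℝ) + 1 + 1 ≠ 0 := by positivity
    field_simp
    ring

lemma gru_partial_nonpos {α : ℝ} (h1 : 1 < α) (h2 : α ≤ 2) (n : ℕ) :
    ∑ k ∈ Finset.range (n + 2), gru α k ≤ 0 := by
  have h := gru_partial α (n + 1)
  have h3 : 0 ≤ gru α (n + 1 + 1) * ((n + 1 : ℕ) + 1) :=
    mul_nonneg (gru_nonneg h1 h2 n) (by positivity)
  rw [h] at h3
  nlinarith

/-- The conditions on a weight sequence from which negativity of the quadratic form of the
associated Toeplitz matrix is derived. -/
structure GoodWeights (w : ℕ → ℝ) : Prop where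
  c1 : 0 < w 0 + w 2
  c2 : 0 < w 0 + w 2 + 4 * w 3
  nonneg : ∀ k, 0 ≤ w (k + 4)
  partial_sum : ∀ n, ∑ k ∈ Finset.range (n + 4), w k ≤ 0

lemma w10_partial (α : ℝ) (n : ℕ) : ∑ k ∈ Finset.range (n + 1), w10 α k =
    α / 2 * ∑ k ∈ Finset.range (n + 1), gru α k
      + (2 - α) / 2 * ∑ k ∈ Finset.range n, gru α k := by
  induction n with
  | zero => simp [w10]
  | succ n ih =>
    rw [Finset.sum_range_succ, ih, Finset.sum_range_succ _ (n + 1), Finset.sum_range_succ _ n]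
    simp only [w10]
    ring

lemma w1m1_partial (α : ℝ) (n : ℕ) : ∑ k ∈ Finset.range (n + 2), w1m1 α k =
    (2 + α) / 4 * ∑ k ∈ Finset.range (n + 2), gru α k
      + (2 - α) / 4 * ∑ k ∈ Finset.range n, gru α k := by
  induction n with
  | zero => simp [w1m1, Finset.sum_range_succ]; ring
  | succ n ih =>
    rw [Finset.sum_range_succ, ih, Finset.sum_range_succ _ (n + 2), Finset.sum_range_succ _ n]
    simp only [w1m1]
    ring

lemma good_w10 {α : ℝ} (h1 : 1 < α) (h2 : α ≤ 2) : GoodWeights (w10 α) := by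
  have hc : 0 < w10 α 0 + w10 α 2 := by
    simp only [w10, gru_zero, Nat.reduceAdd, gru_two, gru_one]
    nlinarith [mul_pos (mul_pos (by linarith : 0 < α) (by linarith : 0 < α - 1))
      (by linarith : 0 < α + 2)]
  have hn : ∀ k, 0 ≤ w10 α (k + 3) := fun k => by
    simp only [w10]
    exact add_nonneg (mul_nonneg (by linarith) (gru_nonneg h1 h2 (k + 1)))
      (mul_nonneg (by linarith) (gru_nonneg h1 h2 k))
  refine ⟨hc, by linarith [hn 0], fun k => hn (k + 1), fun n => ?_⟩
  rw [w10_partial α (n + 3)]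
  nlinarith [gru_partial_nonpos h1 h2 (n + 1), gru_partial_nonpos h1 h2 (n + 2)]

lemma good_w1m1 {α : ℝ} (h1 : 1 < α) (h2 : α ≤ 2) : GoodWeights (w1m1 α) := by
  refine ⟨?_, ?_, fun k => ?_, fun n => ?_⟩
  · simp only [w1m1, gru_zero, zero_add, gru_two]
    nlinarith [mul_pos (mul_pos (by linarith : 0 < α) (by linarith : 0 < α - 1))
      (by linarith : 0 < α + 2)]
  · simp only [w1m1, gru_zero, zero_add, Nat.reduceAdd, gru_two, gru_one, gru_three]
    -- up to the factor `24` the left side is a quartic in `α` that vanishes at `α = 1`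
    have h : 0 < (α - 1) * (4 * α * (4 - α ^ 2) + 3 * α ^ 2 + 30 * α - 24) := by
      have h4 : 0 ≤ α * (4 - α ^ 2) := mul_nonneg (by linarith) (by nlinarith)
      exact mul_pos (by linarith) (by nlinarith)
    linarith
  · simp only [w1m1]
    exact add_nonneg (mul_nonneg (by linarith) (gru_nonneg h1 h2 (k + 2)))
      (mul_nonneg (by linarith) (gru_nonneg h1 h2 k))
  · rw [w1m1_partial α (n + 2)]
    nlinarith [gru_partial_nonpos h1 h2 n, gru_partial_nonpos h1 h2 (n + 2)]

/-! ### Negativity of the quadratic form -/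

/-- Rewrites a row of the Toeplitz product as a sum over the lag `k = i - j`. -/
lemma toeplitz_row (w z : ℕ → ℝ) (M : ℕ) (hz : ∀ n, M ≤ n → z n = 0) (j : ℕ) :
    ∑ i ∈ Finset.range M, (if j ≤ i then w (i - j) else 0) * z i
      = ∑ k ∈ Finset.range M, w k * z (j + k) := by
  have h1 : ∀ k, z (j + k) = ∑ i ∈ Finset.range M, if j + k = i then z i else 0 := fun k => by
    rw [Finset.sum_ite_eq]
    split_ifs with h
    · rfl
    · exact hz _ (by simpa using h)
  simp_rw [h1, Finset.mul_sum]
  rw [Finset.sum_comm]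
  refine Finset.sum_congr rfl fun i hi => ?_
  rw [Finset.mem_range] at hi
  split_ifs with hji
  · rw [Finset.sum_eq_single (i - j)]
    · rw [if_pos (by omega)]
    · intro k _ hk
      rw [if_neg (by omega), mul_zero]
    · intro h
      exact absurd (Finset.mem_range.2 (by omega)) h
  · rw [zero_mul, Finset.sum_eq_zero]
    intro k _
    rw [if_neg (by omega), mul_zero]

/-- The lag-`k` autocorrelation of the sequence `z 1, …, z m`. -/
noncomputable def corr (z : ℕ → ℝ) (m k : ℕ) : ℝ :=
  ∑ j ∈ Finset.range m, z (j + 1) * z (j + 1 + k)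

lemma sum_sq_shift (z : ℕ → ℝ) (m : ℕ) (hz : ∀ n, m < n → z n = 0) (k : ℕ) :
    ∑ j ∈ Finset.range m, z (j + 1 + k) ^ 2
      = ∑ j ∈ Finset.range m, z (j + 1) ^ 2 - ∑ j ∈ Finset.range k, z (j + 1) ^ 2 := by
  have h1 := Finset.sum_range_add (fun j => z (j + 1) ^ 2) k m
  have h2 := Finset.sum_range_add (fun j => z (j + 1) ^ 2) m k
  have h3 : ∑ j ∈ Finset.range k, z (m + j + 1) ^ 2 = 0 :=
    Finset.sum_eq_zero fun j _ => by rw [hz _ (by omega)]; norm_num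
  have h4 : ∑ j ∈ Finset.range m, z (j + 1 + k) ^ 2
      = ∑ j ∈ Finset.range m, z (k + j + 1) ^ 2 :=
    Finset.sum_congr rfl fun j _ => by rw [show j + 1 + k = k + j + 1 by ring]
  rw [add_comm m k] at h2
  linarith

/-- Writes twice the defect `S 0 - S k` of the autocorrelation as a sum of squares; the first sum on the
right collects the terms in which one of the two entries falls off the left end. -/
lemma two_corr (z : ℕ → ℝ) (m : ℕ) (hz : ∀ n, m < n → z n = 0) (k : ℕ) :
    2 * (corr z m 0 - corr z m k) = ∑ j ∈ Finset.range k, z (j + 1) ^ 2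
      + ∑ j ∈ Finset.range m, (z (j + 1) - z (j + 1 + k)) ^ 2 := by
  have h := sum_sq_shift z m hz k
  have : ∑ j ∈ Finset.range m, (z (j + 1) - z (j + 1 + k)) ^ 2
      = ∑ j ∈ Finset.range m, z (j + 1) ^ 2 + ∑ j ∈ Finset.range m, z (j + 1 + k) ^ 2
        - 2 * corr z m k := by
    rw [corr, Finset.mul_sum, ← Finset.sum_add_distrib, ← Finset.sum_sub_distrib]
    exact Finset.sum_congr rfl fun j _ => by ring
  have h0 : corr z m 0 = ∑ j ∈ Finset.range m, z (j + 1) ^ 2 :=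
    Finset.sum_congr rfl fun j _ => by rw [add_zero]; ring
  linarith

lemma corr_le (z : ℕ → ℝ) (m : ℕ) (hz : ∀ n, m < n → z n = 0) (k : ℕ) :
    corr z m k ≤ corr z m 0 := by
  have h := two_corr z m hz k
  have h1 : 0 ≤ ∑ j ∈ Finset.range k, z (j + 1) ^ 2 := Finset.sum_nonneg fun _ _ => sq_nonneg _
  have h2 : 0 ≤ ∑ j ∈ Finset.range m, (z (j + 1) - z (j + 1 + k)) ^ 2 :=
    Finset.sum_nonneg fun _ _ => sq_nonneg _
  linarith

lemma corr_one_lt (z : ℕ → ℝ) (m : ℕ) (hz : ∀ n, m < n → z n = 0)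
    (hne : ∃ n, z (n + 1) ≠ 0) : corr z m 1 < corr z m 0 := by
  refine lt_of_le_of_ne (corr_le z m hz 1) fun heq => ?_
  have h := two_corr z m hz 1
  rw [heq, sub_self, mul_zero, Finset.sum_range_one] at h
  have h2 : 0 ≤ ∑ j ∈ Finset.range m, (z (j + 1) - z (j + 1 + 1)) ^ 2 :=
    Finset.sum_nonneg fun _ _ => sq_nonneg _
  have h3 : ∑ j ∈ Finset.range m, (z (j + 1) - z (j + 1 + 1)) ^ 2 = 0 := by
    nlinarith [sq_nonneg (z (0 + 1))]
  have h1 : z (0 + 1) = 0 := by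
    have : z (0 + 1) ^ 2 = 0 := by linarith
    exact pow_eq_zero_iff two_ne_zero |>.1 this
  rw [Finset.sum_eq_zero_iff_of_nonneg fun _ _ => sq_nonneg _] at h3
  have hall : ∀ n, z (n + 1) = 0 := fun n => by
    induction n with
    | zero => exact h1
    | succ n ih =>
      by_cases hn : n < m
      · have := pow_eq_zero_iff two_ne_zero |>.1 (h3 n (Finset.mem_range.2 hn))
        linarith
      · exact hz _ (by omega)
  obtain ⟨n, hn⟩ := hne
  exact hn (hall n)

/-- Summed form of `(a - c) ^ 2 ≤ 2 * (a - b) ^ 2 + 2 * (b - c) ^ 2`: a possibly negative coefficient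
at lag `2` is controlled by the one at lag `1`. -/
lemma corr_two (z : ℕ → ℝ) (m : ℕ) (hz : ∀ n, m < n → z n = 0) :
    corr z m 0 - corr z m 2 ≤ 4 * (corr z m 0 - corr z m 1) := by
  have e1 := two_corr z m hz 1
  have e2 := two_corr z m hz 2
  have hsh : ∑ j ∈ Finset.range m, (z (j + 1 + 1) - z (j + 1 + 1 + 1)) ^ 2
      = ∑ j ∈ Finset.range m, (z (j + 1) - z (j + 1 + 1)) ^ 2 - (z 1 - z 2) ^ 2 := by
    have h1 := Finset.sum_range_succ (fun j => (z (j + 1) - z (j + 1 + 1)) ^ 2) m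
    have h2 := Finset.sum_range_succ' (fun j => (z (j + 1) - z (j + 1 + 1)) ^ 2) m
    have h3 : (z (m + 1) - z (m + 1 + 1)) ^ 2 = 0 := by
      rw [hz _ (by omega), hz (m + 1 + 1) (by omega)]; norm_num
    simp only [zero_add, Nat.reduceAdd] at h1 h2
    linarith
  have hle : ∑ j ∈ Finset.range m, (z (j + 1) - z (j + 1 + 2)) ^ 2
      ≤ 2 * ∑ j ∈ Finset.range m, (z (j + 1) - z (j + 1 + 1)) ^ 2
        + 2 * ∑ j ∈ Finset.range m, (z (j + 1 + 1) - z (j + 1 + 1 + 1)) ^ 2 := by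
    rw [Finset.mul_sum, Finset.mul_sum, ← Finset.sum_add_distrib]
    refine Finset.sum_le_sum fun j _ => ?_
    rw [show j + 1 + 2 = j + 1 + 1 + 1 by ring]
    nlinarith [sq_nonneg ((z (j + 1) - z (j + 1 + 1)) - (z (j + 1 + 1) - z (j + 1 + 1 + 1)))]
  simp only [Finset.sum_range_succ, Finset.sum_range_zero, zero_add, Nat.reduceAdd] at e1 e2
  nlinarith [sq_nonneg (2 * z 1 - z 2)]

lemma corr_form_neg {w : ℕ → ℝ} (hw : GoodWeights w) (z : ℕ → ℝ) (m : ℕ)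
    (hz : ∀ n, m < n → z n = 0) (hne : ∃ n, z (n + 1) ≠ 0) (N : ℕ) :
    w 0 * corr z m 1 + ∑ k ∈ Finset.range (N + 3), w (k + 1) * corr z m k < 0 := by
  have h1 := corr_one_lt z m hz hne
  have h2 := corr_le z m hz 2
  have h4 := corr_two z m hz
  have h0 : 0 ≤ corr z m 0 := Finset.sum_nonneg fun j _ => mul_self_nonneg _
  have htail : ∑ k ∈ Finset.range N, w (k + 4) * corr z m (k + 3)
      ≤ (∑ k ∈ Finset.range N, w (k + 4)) * corr z m 0 := by
    rw [Finset.sum_mul]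
    exact Finset.sum_le_sum fun k _ =>
      mul_le_mul_of_nonneg_left (corr_le z m hz _) (hw.nonneg k)
  have hp := hw.partial_sum N
  have hc1 := hw.c1
  have hc2 := hw.c2
  simp only [Finset.sum_range_succ', zero_add, Nat.reduceAdd, add_assoc] at hp ⊢
  have hp' := mul_nonpos_of_nonpos_of_nonneg hp h0
  have key : (w 0 + w 2) * (corr z m 0 - corr z m 1) + w 3 * (corr z m 0 - corr z m 2) > 0 := by
    rcases le_total 0 (w 3) with h3 | h3
    · nlinarith [mul_pos hc1 (sub_pos.2 h1), mul_nonneg h3 (sub_nonneg.2 h2)]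
    · nlinarith [mul_pos hc2 (sub_pos.2 h1),
        mul_nonneg (neg_nonneg.2 h3) (sub_nonneg.2 h4)]
  nlinarith

/-- The quadratic form of `D` is negative on nonzero vectors; `D` need not be symmetric. -/
def NegForm {ι : Type*} [Fintype ι] (D : Matrix ι ι ℝ) : Prop :=
  ∀ u : ι → ℝ, u ≠ 0 → u ⬝ᵥ D *ᵥ u < 0

lemma quad_neg {w : ℕ → ℝ} (hw : GoodWeights w) (m : ℕ) : NegForm (wsgdMatrix w m) := by
  intro u hu
  -- `z` is `u` moved to the positions `1, …, m` and extended by zero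
  let z : ℕ → ℝ := fun n => if h : 1 ≤ n ∧ n ≤ m then u ⟨n - 1, by omega⟩ else 0
  have hz : ∀ n, m < n → z n = 0 := fun n hn => dif_neg (by omega)
  have hz0 : z 0 = 0 := dif_neg (by omega)
  have hzu : ∀ i : Fin m, z (i + 1) = u i := fun i => by
    have : 1 ≤ (i : ℕ) + 1 ∧ (i : ℕ) + 1 ≤ m := by omega
    simp only [z, dif_pos this]
    rfl
  have hne : ∃ n, z (n + 1) ≠ 0 := by
    obtain ⟨i, hi⟩ := Function.ne_iff.1 hu
    exact ⟨i, by rw [hzu]; exact hi⟩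
  have hform := corr_form_neg hw z m hz hne (m + 1)
  suffices h : u ⬝ᵥ wsgdMatrix w m *ᵥ u
      = w 0 * corr z m 1 + ∑ k ∈ Finset.range (m + 4), w (k + 1) * corr z m k by
    rw [h]; exact hform
  have hcol : ∀ j : ℕ, ∑ i ∈ Finset.range m, z (i + 1) * (if j ≤ i + 1 then w (i + 1 - j) else 0)
      = ∑ k ∈ Finset.range (m + 5), w k * z (j + k) := fun j => by
    rw [← toeplitz_row w z (m + 5) (fun n hn => hz n (by omega)) j, Finset.sum_range_succ']
    simp only [Finset.sum_range_succ, hz0, hz (m + 1) (by omega), hz (m + 1 + 1) (by omega),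
      hz (m + 2 + 1) (by omega), hz (m + 3 + 1) (by omega), mul_zero, add_zero]
    exact Finset.sum_congr rfl fun i _ => mul_comm _ _
  calc u ⬝ᵥ wsgdMatrix w m *ᵥ u
      = ∑ i : Fin m, ∑ j : Fin m, z (i + 1) *
          (if (j : ℕ) ≤ i + 1 then w (i + 1 - j) else 0) * z (j + 1) := by
        simp only [dotProduct, mulVec, wsgdMatrix, Matrix.of_apply, Finset.mul_sum, hzu, mul_assoc]
    _ = ∑ j : Fin m, (∑ i : Fin m, z (i + 1) *
          (if (j : ℕ) ≤ i + 1 then w (i + 1 - j) else 0)) * z (j + 1) := by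
        rw [Finset.sum_comm]; simp only [Finset.sum_mul]
    _ = ∑ j ∈ Finset.range m, (∑ i ∈ Finset.range m, z (i + 1) *
          (if j ≤ i + 1 then w (i + 1 - j) else 0)) * z (j + 1) := by
        rw [← Fin.sum_univ_eq_sum_range (fun j => (∑ i ∈ Finset.range m, z (i + 1) *
          (if j ≤ i + 1 then w (i + 1 - j) else 0)) * z (j + 1))]
        refine Finset.sum_congr rfl fun j _ => ?_
        rw [← Fin.sum_univ_eq_sum_range (fun i => z (i + 1) *
          (if (j : ℕ) ≤ i + 1 then w (i + 1 - j) else 0))]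
    _ = ∑ k ∈ Finset.range (m + 5), w k * ∑ j ∈ Finset.range m, z (j + 1) * z (j + k) := by
        simp only [hcol, Finset.sum_mul, Finset.mul_sum]
        rw [Finset.sum_comm]
        exact Finset.sum_congr rfl fun k _ => Finset.sum_congr rfl fun j _ => by ring
    _ = _ := by
        rw [Finset.sum_range_succ', add_comm]
        congr 1
        · -- both sides sum `z j * z (j + 1)`, whose terms at `j = 0` and `j = m` vanish
          congr 1
          have e1 := Finset.sum_range_succ (fun j => z j * z (j + 1)) m
          have e2 := Finset.sum_range_succ' (fun j => z j * z (j + 1)) m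
          simp only [hz0, hz (m + 1) (by omega), mul_zero, zero_mul, add_zero] at e1 e2
          rw [corr, ← e2, e1]
          exact Finset.sum_congr rfl fun j _ => mul_comm _ _
        · refine Finset.sum_congr rfl fun k _ => ?_
          congr 1
          exact Finset.sum_congr rfl fun j _ => by rw [show j + (k + 1) = j + 1 + k by ring]

/-! ### Operations preserving negativity -/

section NegForm

variable {ι κ : Type*} [Fintype ι] [Fintype κ]

lemma NegForm.transpose {A : Matrix ι ι ℝ} (hA : NegForm A) : NegForm Aᵀ := by
  intro u hu
  rw [Matrix.mulVec_transpose, dotProduct_comm, ← Matrix.dotProduct_mulVec]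
  exact hA u hu

lemma NegForm.combine {A B : Matrix ι ι ℝ} (hA : NegForm A) (hB : NegForm B) {c a b : ℝ}
    (hc : 0 < c) (ha : 0 ≤ a) (hb : 0 ≤ b) (hab : a ^ 2 + b ^ 2 ≠ 0) :
    NegForm (c • (a • A + b • B)) := by
  intro u hu
  simp only [smul_mulVec, add_mulVec, dotProduct_smul, dotProduct_add, smul_eq_mul]
  refine mul_neg_of_pos_of_neg hc ?_
  have h1 := hA u hu
  have h2 := hB u hu
  rcases ha.eq_or_lt with rfl | ha'
  · rcases hb.eq_or_lt with rfl | hb'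
    · simp at hab
    · nlinarith [mul_neg_of_pos_of_neg hb' h2]
  · nlinarith [mul_neg_of_pos_of_neg ha' h1, mul_nonpos_of_nonneg_of_nonpos hb h2.le]

lemma NegForm.nonpos {A : Matrix ι ι ℝ} (hA : NegForm A) (u : ι → ℝ) : u ⬝ᵥ A *ᵥ u ≤ 0 := by
  by_cases hu : u = 0
  · simp [hu]
  · exact (hA u hu).le

lemma NegForm.one_kronecker [DecidableEq κ] {A : Matrix ι ι ℝ} (hA : NegForm A) :
    NegForm ((1 : Matrix κ κ ℝ) ⊗ₖ A) := by
  intro u hu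
  have h : u ⬝ᵥ ((1 : Matrix κ κ ℝ) ⊗ₖ A) *ᵥ u
      = ∑ i : κ, (fun j => u (i, j)) ⬝ᵥ A *ᵥ (fun j => u (i, j)) := by
    simp [dotProduct, mulVec, Fintype.sum_prod_type, Matrix.kroneckerMap_apply, Matrix.one_apply,
      ite_mul]
  rw [h]
  obtain ⟨⟨i, j⟩, hij⟩ := Function.ne_iff.1 hu
  refine Finset.sum_neg' (fun i _ => hA.nonpos _) ⟨i, Finset.mem_univ _, hA _ ?_⟩
  exact Function.ne_iff.2 ⟨j, hij⟩

lemma NegForm.kronecker_one [DecidableEq κ] {A : Matrix ι ι ℝ} (hA : NegForm A) :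
    NegForm (A ⊗ₖ (1 : Matrix κ κ ℝ)) := by
  intro u hu
  have h : u ⬝ᵥ (A ⊗ₖ (1 : Matrix κ κ ℝ)) *ᵥ u
      = ∑ j : κ, (fun i => u (i, j)) ⬝ᵥ A *ᵥ (fun i => u (i, j)) := by
    simp only [dotProduct, mulVec, Fintype.sum_prod_type_right, Matrix.kroneckerMap_apply,
      Matrix.one_apply, mul_ite, mul_one, mul_zero, ite_mul, zero_mul]
    refine Finset.sum_congr rfl fun j _ => Finset.sum_congr rfl fun i _ => ?_
    congr 1
    rw [Finset.sum_comm]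
    simp
  rw [h]
  obtain ⟨⟨i, j⟩, hij⟩ := Function.ne_iff.1 hu
  refine Finset.sum_neg' (fun i _ => hA.nonpos _) ⟨j, Finset.mem_univ _, hA _ ?_⟩
  exact Function.ne_iff.2 ⟨i, hij⟩

/-! ### Cayley transforms and convergence of powers -/

variable [DecidableEq ι]

lemma NegForm.isUnit_one_sub {D : Matrix ι ι ℝ} (hD : NegForm D) : IsUnit (1 - D) := by
  rw [← Matrix.mulVec_injective_iff_isUnit]
  refine (injective_iff_map_eq_zero (Matrix.mulVecLin (1 - D))).2 fun u hu => ?_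
  by_contra hne
  rw [Matrix.mulVecLin_apply, Matrix.sub_mulVec, Matrix.one_mulVec, sub_eq_zero] at hu
  have h := hD u hne
  rw [← hu] at h
  exact absurd h (not_lt.2 (Finset.sum_nonneg fun i _ => mul_self_nonneg _))

/-- The difference of the two sides is `4 * (v ⬝ᵥ D *ᵥ v)`. -/
lemma NegForm.cayley_lt {D : Matrix ι ι ℝ} (hD : NegForm D) {v : ι → ℝ} (hv : v ≠ 0) :
    ((1 + D) *ᵥ v) ⬝ᵥ ((1 + D) *ᵥ v) < ((1 - D) *ᵥ v) ⬝ᵥ ((1 - D) *ᵥ v) := by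
  have h := hD v hv
  simp only [Matrix.sub_mulVec, Matrix.add_mulVec, Matrix.one_mulVec, add_dotProduct,
    dotProduct_add, sub_dotProduct, dotProduct_sub]
  rw [dotProduct_comm (D *ᵥ v) v]
  linarith

open scoped Matrix.Norms.L2Operator in
/-- The operator norm is attained on the compact unit sphere, hence is `< 1`. -/
lemma tendsto_pow_of_contract (N : Matrix ι ι ℝ)
    (hN : ∀ u : ι → ℝ, u ≠ 0 → (N *ᵥ u) ⬝ᵥ (N *ᵥ u) < u ⬝ᵥ u) :
    Tendsto (fun n : ℕ => N ^ n) atTop (nhds 0) := by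
  refine tendsto_pow_atTop_nhds_zero_of_norm_lt_one ?_
  have hsq : ∀ u : ι → ℝ, ‖WithLp.toLp 2 u‖ ^ 2 = u ⬝ᵥ u := fun u => by
    rw [EuclideanSpace.real_norm_sq_eq]
    exact Finset.sum_congr rfl fun i _ => sq _
  have hlt : ∀ x : EuclideanSpace ℝ ι, x ≠ 0 → ‖Matrix.toEuclideanCLM (𝕜 := ℝ) N x‖ < ‖x‖ := by
    intro x hx
    refine lt_of_pow_lt_pow_left₀ 2 (norm_nonneg _) ?_
    have := hN (WithLp.ofLp x) (fun h => hx (by ext i; exact congrFun h i))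
    rw [← hsq, ← hsq] at this
    exact this
  rw [Matrix.cstar_norm_def]
  rcases subsingleton_or_nontrivial (EuclideanSpace ℝ ι) with hs | hs
  · rw [Subsingleton.elim (Matrix.toEuclideanCLM (𝕜 := ℝ) N) 0, norm_zero]
    exact one_pos
  obtain ⟨x₀, hx₀, hmax⟩ := (isCompact_sphere (0 : EuclideanSpace ℝ ι) 1).exists_isMaxOn
    (NormedSpace.sphere_nonempty.2 zero_le_one)
    (f := fun x => ‖Matrix.toEuclideanCLM (𝕜 := ℝ) N x‖) (by fun_prop)
  have hx₀' : ‖x₀‖ = 1 := by simpa using hx₀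
  have h1 := hlt x₀ (fun h => by simp [h] at hx₀')
  rw [hx₀'] at h1
  refine lt_of_le_of_lt ?_ h1
  refine ContinuousLinearMap.opNorm_le_of_unit_norm (norm_nonneg _) fun x hx => ?_
  exact hmax (by simpa using hx)

/-- The iteration matrix is conjugate, via `1 - E`, to a product of two Cayley transforms, each of
which strictly decreases the Euclidean norm; `D` and `E` need not commute. -/
lemma adi_tendsto {D E : Matrix ι ι ℝ} (hD : NegForm D) (hE : NegForm E) :
    Tendsto (fun n : ℕ => ((1 - E)⁻¹ * (1 - D)⁻¹ * (1 + D) * (1 + E)) ^ n) atTop (nhds 0) := by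
  have uD := (Matrix.isUnit_iff_isUnit_det _).1 hD.isUnit_one_sub
  have uE := (Matrix.isUnit_iff_isUnit_det _).1 hE.isUnit_one_sub
  have hinvD : (1 - D) * (1 - D)⁻¹ = 1 := Matrix.mul_nonsing_inv _ uD
  have hinvD' : (1 - D)⁻¹ * (1 - D) = 1 := Matrix.nonsing_inv_mul _ uD
  have hinvE : (1 - E) * (1 - E)⁻¹ = 1 := Matrix.mul_nonsing_inv _ uE
  have hinvE' : (1 - E)⁻¹ * (1 - E) = 1 := Matrix.nonsing_inv_mul _ uE
  -- the two factors of the Cayley transform commute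
  have hcomm : (1 - D)⁻¹ * (1 + D) = (1 + D) * (1 - D)⁻¹ := by
    have h : (1 + D) * (1 - D) = (1 - D) * (1 + D) := by noncomm_ring
    calc (1 - D)⁻¹ * (1 + D) = (1 - D)⁻¹ * ((1 + D) * (1 - D)) * (1 - D)⁻¹ := by
          rw [mul_assoc, mul_assoc, hinvD, mul_one]
      _ = (1 + D) * (1 - D)⁻¹ := by rw [h, ← mul_assoc, hinvD', one_mul]
  have hC : ∀ {F : Matrix ι ι ℝ}, NegForm F → (1 - F) * (1 - F)⁻¹ = 1 → ∀ u : ι → ℝ, u ≠ 0 →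
      (((1 + F) * (1 - F)⁻¹) *ᵥ u) ⬝ᵥ (((1 + F) * (1 - F)⁻¹) *ᵥ u) < u ⬝ᵥ u := by
    intro F hF hinv u hu
    have hu' : (1 - F) *ᵥ ((1 - F)⁻¹ *ᵥ u) = u := by
      rw [Matrix.mulVec_mulVec, hinv, Matrix.one_mulVec]
    have hne : (1 - F)⁻¹ *ᵥ u ≠ 0 := fun h => hu (by rw [← hu', h, Matrix.mulVec_zero])
    have := hF.cayley_lt hne
    rwa [hu', Matrix.mulVec_mulVec] at this
  set N : Matrix ι ι ℝ := (1 - D)⁻¹ * (1 + D) * ((1 + E) * (1 - E)⁻¹) with hNdef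
  have hN : Tendsto (fun n : ℕ => N ^ n) atTop (nhds 0) := by
    refine tendsto_pow_of_contract N fun u hu => ?_
    rw [hNdef, hcomm, ← Matrix.mulVec_mulVec]
    have h1 := hC hE hinvE u hu
    by_cases h0 : ((1 + E) * (1 - E)⁻¹) *ᵥ u = 0
    · rw [h0] at h1 ⊢
      simpa using h1
    · exact (hC hD hinvD _ h0).trans h1
  have hpow : ∀ n : ℕ, ((1 - E)⁻¹ * (1 - D)⁻¹ * (1 + D) * (1 + E)) ^ n
      = (1 - E)⁻¹ * N ^ n * (1 - E) := by
    intro n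
    induction n with
    | zero => rw [pow_zero, pow_zero, mul_one, hinvE']
    | succ n ih =>
      have hM : (1 - E)⁻¹ * (1 - D)⁻¹ * (1 + D) * (1 + E) = (1 - E)⁻¹ * N * (1 - E) := by
        rw [hNdef]
        simp only [mul_assoc, hinvE', mul_one]
      rw [pow_succ, ih, hM, pow_succ]
      calc (1 - E)⁻¹ * N ^ n * (1 - E) * ((1 - E)⁻¹ * N * (1 - E))
          = (1 - E)⁻¹ * N ^ n * ((1 - E) * (1 - E)⁻¹) * N * (1 - E) := by
            simp only [mul_assoc]
        _ = (1 - E)⁻¹ * (N ^ n * N) * (1 - E) := by rw [hinvE, mul_one]; simp only [mul_assoc]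
  simp_rw [hpow]
  have := (hN.const_mul (1 - E)⁻¹).mul_const (1 - E)
  simpa using this

end NegForm

theorem ADI_iteration_matrix_powers_tendsto_zero (α β : ℝ) (hα1 : 1 < α) (hα2 : α ≤ 2)
    (hβ1 : 1 < β) (hβ2 : β ≤ 2) (m : ℕ) (hm : 1 ≤ m)
    (Aα Aβ : Matrix (Fin m) (Fin m) ℝ)
    (hAα : Aα = wsgdMatrix (w10 α) m ∨ Aα = wsgdMatrix (w1m1 α) m)
    (hAβ : Aβ = wsgdMatrix (w10 β) m ∨ Aβ = wsgdMatrix (w1m1 β) m)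
    (τ h : ℝ) (hτ : 0 < τ) (hh : 0 < h)
    (K1p K2p K1m K2m : ℝ) (hK1p : 0 ≤ K1p) (hK2p : 0 ≤ K2p)
    (hK1m : 0 ≤ K1m) (hK2m : 0 ≤ K2m)
    (hKp : K1p ^ 2 + K2p ^ 2 ≠ 0) (hKm : K1m ^ 2 + K2m ^ 2 ≠ 0)
    (Dx Dy : Matrix (Fin m × Fin m) (Fin m × Fin m) ℝ)
    (hDx : Dx = (τ / (2 * h ^ α)) •
      (K1p • ((1 : Matrix (Fin m) (Fin m) ℝ) ⊗ₖ Aα)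
        + K2p • ((1 : Matrix (Fin m) (Fin m) ℝ) ⊗ₖ Aαᵀ)))
    (hDy : Dy = (τ / (2 * h ^ β)) •
      (K1m • (Aβ ⊗ₖ (1 : Matrix (Fin m) (Fin m) ℝ))
        + K2m • (Aβᵀ ⊗ₖ (1 : Matrix (Fin m) (Fin m) ℝ)))) :
    IsUnit (1 - Dx) ∧ IsUnit (1 - Dy) ∧
    Tendsto (fun n : ℕ =>
        ((1 - Dy)⁻¹ * (1 - Dx)⁻¹ * (1 + Dx) * (1 + Dy)) ^ n)
      atTop (nhds 0) := by
  have hA : NegForm Aα := by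
    rcases hAα with rfl | rfl
    · exact quad_neg (good_w10 hα1 hα2) m
    · exact quad_neg (good_w1m1 hα1 hα2) m
  have hB : NegForm Aβ := by
    rcases hAβ with rfl | rfl
    · exact quad_neg (good_w10 hβ1 hβ2) m
    · exact quad_neg (good_w1m1 hβ1 hβ2) m
  have hx : NegForm Dx := by
    rw [hDx]
    exact NegForm.combine hA.one_kronecker hA.transpose.one_kronecker
      (div_pos hτ (mul_pos two_pos (Real.rpow_pos_of_pos hh α))) hK1p hK2p hKp
  have hy : NegForm Dy := by
    rw [hDy]
    exact NegForm.combine hB.kronecker_one hB.transpose.kronecker_one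
      (div_pos hτ (mul_pos two_pos (Real.rpow_pos_of_pos hh β))) hK1m hK2m hKm
  exact ⟨hx.isUnit_one_sub, hy.isUnit_one_sub, adi_tendsto hx hy⟩
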